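/- Let E and F be real Hilbert spaces and let f, g : E → F be maps satisfying the generalized orthogonality equation ⟨f(x), g(y)⟩ = ⟨x, y⟩ for all x, y ∈ E, where ⟨·,·⟩ denotes the inner products. Then there exist pairwise orthogonal closed linear subspaces F₁, F₂, F₃ of F with F = F₁ ⊕ F₂ ⊕ F₃ (orthogonal direct sum), an invertible bounded linear operator B : E → F₁, and (not necessarily linear) maps μ : E → F₂ and ν : E → F₃, such that f = B + μ and g = (B*)^{-1} + ν, where B* : F₁ → E denotes the Hilbert-space adjoint of B. -/

import Mathlib

open RealInnerProductSpace

/-!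
Projecting `f` onto the closed span `G` of the values of `g` does not change the pairing, and a
map into `G` is determined by its pairings with `g`. So `A := P_G ∘ f` is linear, and it is bounded
by the closed graph theorem (`exists_clm_of_pairing`). Exchanging the roles, let `H ≤ G` be the
closure of the range of `A`; then `C := P_H ∘ g` is linear and bounded as well, with
`⟪A x, C y⟫ = ⟪x, y⟫`. Hence `A* C = 1` and `C* A = 1` on `E`, and testing against the range of
`A`, which is dense in `H`, gives `C A* = 1` on `H`. So `A` and `A*` restrict to isomorphisms
between `E` and `H`, with inverses `C*` and `C`.
The decomposition is `F₁ = H`, `F₂ = Gᗮ`, `F₃ = Hᗮ ⊓ G`, with `μ = f - A` and `ν = g - C`.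
-/

/-- Two vectors in the closed span of `s` with the same pairings against `s` coincide. -/
lemma eq_of_inner_eq_on_closedSpan {F : Type*} [NormedAddCommGroup F] [InnerProductSpace ℝ F]
    {s : Set F} {u v : F}
    (hu : u ∈ (Submodule.span ℝ s).topologicalClosure)
    (hv : v ∈ (Submodule.span ℝ s).topologicalClosure)
    (h : ∀ w ∈ s, ⟪u, w⟫ = ⟪v, w⟫) : u = v := by
  have hd : u - v ∈ (Submodule.span ℝ s).topologicalClosure := Submodule.sub_mem _ hu hv
  have ho : u - v ∈ (Submodule.span ℝ s)ᗮ := by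
    rw [Submodule.mem_orthogonal']
    intro w hw
    induction hw using Submodule.span_induction with
    | mem w hw => rw [inner_sub_left, h w hw, sub_self]
    | zero => simp
    | add a b _ _ ha hb => rw [inner_add_right, ha, hb, add_zero]
    | smul c a _ ha => rw [inner_smul_right, ha, mul_zero]
  rw [← Submodule.orthogonal_closure] at ho
  have := (Submodule.mem_orthogonal _ _).1 ho _ hd
  exact sub_eq_zero.1 (inner_self_eq_zero.1 this)

/-- A solution `f` of the orthogonality equation with values in the closed span of the values of
`g` is automatically linear and bounded. -/
lemma exists_clm_of_pairing {E F : Type*}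
    [NormedAddCommGroup E] [InnerProductSpace ℝ E] [CompleteSpace E]
    [NormedAddCommGroup F] [InnerProductSpace ℝ F] [CompleteSpace F]
    (f g : E → F) (hpair : ∀ x y : E, ⟪f x, g y⟫ = ⟪x, y⟫)
    (hf : ∀ x, f x ∈ (Submodule.span ℝ (Set.range g)).topologicalClosure) :
    ∃ A : E →L[ℝ] F, ∀ x, A x = f x := by
  let L : E →ₗ[ℝ] F :=
    { toFun := f
      map_add' := fun x y => by
        refine eq_of_inner_eq_on_closedSpan (hf _) (Submodule.add_mem _ (hf _) (hf _)) ?_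
        rintro _ ⟨z, rfl⟩
        simp only [inner_add_left, hpair]
      map_smul' := fun c x => by
        refine eq_of_inner_eq_on_closedSpan (hf _) (Submodule.smul_mem _ _ (hf _)) ?_
        rintro _ ⟨z, rfl⟩
        simp only [inner_smul_left, hpair, RingHom.id_apply] }
  refine ⟨⟨L, L.continuous_of_seq_closed_graph ?_⟩, fun x => rfl⟩
  intro u x y hu hy
  refine eq_of_inner_eq_on_closedSpan ?_ (hf x) ?_
  · exact (Submodule.isClosed_topologicalClosure _).mem_of_tendsto hy
      (Filter.Eventually.of_forall fun n => hf (u n))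
  · rintro _ ⟨z, rfl⟩
    have h1 : Filter.Tendsto (fun n => ⟪f (u n), g z⟫) Filter.atTop (nhds ⟪y, g z⟫) :=
      Filter.Tendsto.inner hy tendsto_const_nhds
    simp only [hpair] at h1
    rw [show ⟪L x, g z⟫ = ⟪x, z⟫ from hpair x z]
    exact tendsto_nhds_unique h1 (Filter.Tendsto.inner hu tendsto_const_nhds)

/-- Corollary (Łukasik–Wójcik): if `E, F` are real Hilbert spaces and `f, g : E → F`
satisfy the generalized orthogonality equation `⟨f(x), g(y)⟩ = ⟨x, y⟩`, then there are
pairwise orthogonal closed subspaces `F₁, F₂, F₃` with `F = F₁ ⊕ F₂ ⊕ F₃`, an invertible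
bounded linear operator `B : E → F₁` (with Hilbert-space adjoint `B* : F₁ → E`,
characterized by `⟨B x, z⟩ = ⟨x, B* z⟩`, itself invertible), and maps `μ : E → F₂`,
`ν : E → F₃` such that `f = B + μ` and `g = (B*)⁻¹ + ν`. -/
theorem generalized_orthogonality_decomposition {E F : Type*}
    [NormedAddCommGroup E] [InnerProductSpace ℝ E] [CompleteSpace E]
    [NormedAddCommGroup F] [InnerProductSpace ℝ F] [CompleteSpace F]
    (f g : E → F)
    (hpair : ∀ x y : E, ⟪f x, g y⟫ = ⟪x, y⟫) :
    ∃ F₁ F₂ F₃ : Submodule ℝ F,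
      IsClosed (F₁ : Set F) ∧ IsClosed (F₂ : Set F) ∧ IsClosed (F₃ : Set F) ∧
      -- pairwise orthogonal
      (∀ x ∈ F₁, ∀ y ∈ F₂, ⟪x, y⟫ = 0) ∧
      (∀ x ∈ F₁, ∀ y ∈ F₃, ⟪x, y⟫ = 0) ∧
      (∀ x ∈ F₂, ∀ y ∈ F₃, ⟪x, y⟫ = 0) ∧
      -- F = F₁ ⊕ F₂ ⊕ F₃
      F₁ ⊔ F₂ ⊔ F₃ = ⊤ ∧
      ∃ (B : E ≃L[ℝ] F₁) (Bstar : F₁ ≃L[ℝ] E) (μ : E → F₂) (ν : E → F₃),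
        -- Bstar is the Hilbert-space adjoint of B (itself invertible)
        (∀ (x : E) (z : F₁), ⟪(B x : F), (z : F)⟫ = ⟪x, Bstar z⟫) ∧
        -- f = B + μ
        (∀ x : E, f x = (B x : F) + (μ x : F)) ∧
        -- g = (B*)⁻¹ + ν
        (∀ x : E, g x = (Bstar.symm x : F) + (ν x : F)) := by
  set G : Submodule ℝ F := (Submodule.span ℝ (Set.range g)).topologicalClosure with hG
  have hGc : IsClosed (G : Set F) := Submodule.isClosed_topologicalClosure _
  have : CompleteSpace G := hGc.completeSpace_coe
  have hgG : ∀ y, g y ∈ G := fun y =>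
    Submodule.le_topologicalClosure _ (Submodule.subset_span ⟨y, rfl⟩)
  have hfG : ∀ x, f x - G.starProjection (f x) ∈ Gᗮ := fun x =>
    Submodule.sub_starProjection_mem_orthogonal _
  obtain ⟨A, hA⟩ := exists_clm_of_pairing (fun x => G.starProjection (f x)) g
    (fun x y => by
      have := (Submodule.mem_orthogonal' _ _).1 (hfG x) _ (hgG y)
      rw [inner_sub_left, hpair] at this
      linarith)
    (fun x => Submodule.starProjection_apply_mem _ _)
  have hAG : ∀ x, A x ∈ G := fun x => by
    rw [hA]; exact Submodule.starProjection_apply_mem _ _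
  have hAg : ∀ x y, ⟪A x, g y⟫ = ⟪x, y⟫ := fun x y => by
    have := (Submodule.mem_orthogonal' _ _).1 (hfG x) _ (hgG y)
    rw [inner_sub_left, hpair] at this
    rw [hA]; linarith
  set H : Submodule ℝ F := (Submodule.span ℝ (Set.range A)).topologicalClosure with hH
  have hHc : IsClosed (H : Set F) := Submodule.isClosed_topologicalClosure _
  have : CompleteSpace H := hHc.completeSpace_coe
  have hAH : ∀ x, A x ∈ H := fun x =>
    Submodule.le_topologicalClosure _ (Submodule.subset_span ⟨x, rfl⟩)
  have hHG : H ≤ G := by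
    refine Submodule.topologicalClosure_minimal _ (Submodule.span_le.2 ?_) hGc
    rintro _ ⟨x, rfl⟩
    exact hAG x
  have hgH : ∀ y, g y - H.starProjection (g y) ∈ Hᗮ := fun y =>
    Submodule.sub_starProjection_mem_orthogonal _
  have hpg : ∀ x y, ⟪A x, H.starProjection (g y)⟫ = ⟪x, y⟫ := fun x y => by
    have := (Submodule.mem_orthogonal _ _).1 (hgH y) _ (hAH x)
    rw [inner_sub_right, hAg] at this
    linarith
  obtain ⟨C, hC⟩ := exists_clm_of_pairing (fun y => H.starProjection (g y)) A
    (fun x y => by rw [real_inner_comm, hpg, real_inner_comm])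
    (fun y => Submodule.starProjection_apply_mem _ _)
  have hCH : ∀ y, C y ∈ H := fun y => by
    rw [hC]; exact Submodule.starProjection_apply_mem _ _
  have hAC : ∀ x y, ⟪A x, C y⟫ = ⟪x, y⟫ := fun x y => by rw [hC]; exact hpg x y
  have hA'C : ∀ y, A.adjoint (C y) = y := fun y => by
    refine ext_inner_left ℝ fun x => ?_
    rw [ContinuousLinearMap.adjoint_inner_right, hAC]
  have hC'A : ∀ x, C.adjoint (A x) = x := fun x => by
    refine ext_inner_right ℝ fun y => ?_
    rw [ContinuousLinearMap.adjoint_inner_left, hAC]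
  have hCA' : ∀ z ∈ H, C (A.adjoint z) = z := fun z hz => by
    refine eq_of_inner_eq_on_closedSpan (hCH _) hz ?_
    rintro _ ⟨x, rfl⟩
    rw [real_inner_comm, hAC, ContinuousLinearMap.adjoint_inner_right, real_inner_comm]
  -- `C` maps onto `H` by `hCA'`, so `A (C* z) = z` can be tested against the values of `C`.
  have hAC' : ∀ z ∈ H, A (C.adjoint z) = z := fun z hz => by
    refine eq_of_inner_eq_on_closedSpan (hAH _) hz ?_
    rintro _ ⟨x, rfl⟩
    rw [← hCA' _ (hAH x), hAC, ContinuousLinearMap.adjoint_inner_left]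
  let B : E ≃L[ℝ] H := ContinuousLinearEquiv.equivOfInverse
    (A.codRestrict H hAH) (C.adjoint ∘L H.subtypeL) (fun x => hC'A x)
    (fun z => Subtype.ext (hAC' z z.2))
  let Bstar : H ≃L[ℝ] E := ContinuousLinearEquiv.equivOfInverse
    (A.adjoint ∘L H.subtypeL) (C.codRestrict H hCH)
    (fun z => Subtype.ext (hCA' z z.2)) (fun y => hA'C y)
  refine ⟨H, Gᗮ, Hᗮ ⊓ G, hHc, Submodule.isClosed_orthogonal _,
    (Submodule.isClosed_orthogonal _).inter hGc, ?_, ?_, ?_, ?_, B, Bstar,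
    fun x => ⟨f x - A x, by rw [hA]; exact hfG x⟩,
    fun y => ⟨g y - C y, by rw [hC]; exact hgH y, Submodule.sub_mem _ (hgG y) (hHG (hCH y))⟩,
    ?_, ?_, ?_⟩
  · exact fun x hx y hy => (Submodule.mem_orthogonal _ _).1 hy x (hHG hx)
  · exact fun x hx y hy => (Submodule.mem_orthogonal _ _).1 hy.1 x hx
  · exact fun x hx y hy => (Submodule.mem_orthogonal' _ _).1 hx y hy.2
  · rw [sup_right_comm, Submodule.sup_orthogonal_inf_of_hasOrthogonalProjection hHG,
      Submodule.sup_orthogonal_of_hasOrthogonalProjection]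
  · exact fun x z => (ContinuousLinearMap.adjoint_inner_right A x (z : F)).symm
  · exact fun x => (add_sub_cancel (A x) (f x)).symm
  · exact fun y => (add_sub_cancel (C y) (g y)).symm
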